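/- Let G be a finite group with π_e(G) ⊆ {1,2,3,4,6} whose cyclic subgroups of order 6 are exactly the three subgroups ⟨a⟩, ⟨b⟩, ⟨c⟩, where a, b, c have order 6 and a² = b² = c². If a³ lies in the center Z(G), then |G| ≤ 24. -/

import Mathlib

/-! The element `t = a²` of order 3 lies in every cyclic subgroup of order 6, and `z = a³` is a
central involution. If `s` has order 3, then `⟨zs⟩` is cyclic of order 6, so it contains both `s`
and `t`; hence `⟨t⟩` is the only subgroup of order 3. It is therefore normal, and its centralizer
`C` has index at most `|Aut ⟨t⟩| = 2`. Elements of `C` have order dividing 6, since an element of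
order 4 would produce one of order 12. So every `g ∈ C` is the product of `g³`, with square 1, and
`g⁻² ∈ ⟨t⟩`. Finally `x ↦ ⟨xt⟩` embeds the involutions of `C` into the three cyclic subgroups of
order 6, whence `|C| ≤ (1 + 3) · 3` and `|G| ≤ 2 · 12`. -/

open scoped Pointwise

section Group

variable {G : Type*} [Group G]

lemma pow_eq_pow_of_zpowers_eq_of_orderOf_eq_two_mul {g a : G} {k : ℕ}
    (h : Subgroup.zpowers g = Subgroup.zpowers a) (ha : orderOf a = 2 * k) : g ^ k = a ^ k := by
  obtain rfl | hk := k.eq_zero_or_pos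
  · simp only [pow_zero]
  have hg : orderOf g = 2 * k := by rw [← Nat.card_zpowers, h, Nat.card_zpowers, ha]
  have hsq : (a ^ k) ^ (2 : ℤ) = 1 := by
    rw [zpow_ofNat, ← pow_mul, mul_comm k, ← ha, pow_orderOf_eq_one]
  obtain ⟨m, hm⟩ : ∃ m : ℤ, a ^ m = g := by
    rw [← Subgroup.mem_zpowers_iff, ← h]
    exact Subgroup.mem_zpowers g
  have hpow : g ^ k = (a ^ k) ^ m := by
    rw [← hm, ← zpow_natCast, ← zpow_natCast, ← zpow_mul, ← zpow_mul, mul_comm]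
  obtain ⟨j, rfl | rfl⟩ := m.even_or_odd'
  · have hone : g ^ k = 1 := by rw [hpow, zpow_mul, hsq, one_zpow]
    have := Nat.le_of_dvd hk (orderOf_dvd_of_pow_eq_one hone)
    omega
  · rw [hpow, zpow_add_one, zpow_mul, hsq, one_zpow, one_mul]

lemma mul_pow_eq_left_of_odd {x t : G} {n : ℕ} (h : Commute x t) (hx : x ^ 2 = 1)
    (ht : t ^ n = 1) (hn : Odd n) : (x * t) ^ n = x := by
  obtain ⟨k, rfl⟩ := hn
  rw [h.mul_pow, ht, mul_one, pow_succ, pow_mul, hx, one_pow, one_mul]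

lemma orderOf_mul_eq_two_mul_of_odd {x t : G} (h : Commute x t) (hx : orderOf x = 2)
    (ht : Odd (orderOf t)) : orderOf (x * t) = 2 * orderOf t := by
  rw [h.orderOf_mul_eq_mul_orderOf_of_coprime (by rwa [hx, Nat.coprime_two_left]), hx]

lemma zpowers_normal_of_forall_orderOf_eq {t : G}
    (h : ∀ s : G, orderOf s = orderOf t → s ∈ Subgroup.zpowers t) :
    (Subgroup.zpowers t).Normal := by
  refine ⟨fun s hs g ↦ ?_⟩
  obtain ⟨k, rfl⟩ := Subgroup.mem_zpowers_iff.mp hs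
  rw [← conj_zpow]
  exact Subgroup.zpow_mem _ (h _ ((MulAut.conj g).orderOf_eq t)) k

lemma relIndex_centralizer_normalizer_dvd_totient (H : Subgroup G) [Finite H] [IsCyclic H] :
    (Subgroup.centralizer (H : Set G)).relIndex (Subgroup.normalizer (H : Set G)) ∣
      (Nat.card H).totient := by
  rw [Subgroup.relIndex, ← Subgroup.normalizerMonoidHom_ker, Subgroup.index_ker,
    ← IsCyclic.card_mulAut]
  exact Subgroup.card_subgroup_dvd_card _

lemma index_centralizer_dvd_totient_orderOf {t : G} (ht : IsOfFinOrder t)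
    (hnormal : (Subgroup.zpowers t).Normal) :
    (Subgroup.centralizer {t}).index ∣ (orderOf t).totient := by
  have : Finite (Subgroup.zpowers t) := ht.finite_zpowers
  have := relIndex_centralizer_normalizer_dvd_totient (Subgroup.zpowers t)
  rwa [Subgroup.normalizer_eq_top, Subgroup.relIndex_top_right, Nat.card_zpowers,
    Subgroup.zpowers_eq_closure, Subgroup.centralizer_closure] at this

variable (G) in
/-- The set of cyclic subgroups of order `n`. -/
def cyclicSubgroupsOfCard (n : ℕ) : Set (Subgroup G) :=
  {H | IsCyclic H ∧ Nat.card H = n}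

/-- The set of involutions in the centralizer of `t`; it is compared with the set of cyclic
subgroups of order `2 * orderOf t` through `x ↦ ⟨x * t⟩`. -/
def involutionsCommutingWith (t : G) : Set G :=
  {x | orderOf x = 2 ∧ Commute x t}

lemma zpowers_mem_cyclicSubgroupsOfCard {g : G} {n : ℕ} (hg : orderOf g = n) :
    Subgroup.zpowers g ∈ cyclicSubgroupsOfCard G n :=
  ⟨inferInstance, by rw [Nat.card_zpowers, hg]⟩

lemma mapsTo_zpowers_mul_involutionsCommutingWith {t : G} (ht : Odd (orderOf t)) :
    Set.MapsTo (fun x ↦ Subgroup.zpowers (x * t)) (involutionsCommutingWith t)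
      (cyclicSubgroupsOfCard G (2 * orderOf t)) :=
  fun _ hx ↦ zpowers_mem_cyclicSubgroupsOfCard (orderOf_mul_eq_two_mul_of_odd hx.2 hx.1 ht)

lemma injOn_zpowers_mul_involutionsCommutingWith {t : G} (ht : Odd (orderOf t)) :
    Set.InjOn (fun x ↦ Subgroup.zpowers (x * t)) (involutionsCommutingWith t) := by
  have hpow {x : G} (hx : x ∈ involutionsCommutingWith t) : (x * t) ^ orderOf t = x :=
    mul_pow_eq_left_of_odd hx.2 (orderOf_dvd_iff_pow_eq_one.mp hx.1.dvd) (pow_orderOf_eq_one t) ht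
  intro x hx y hy hxy
  rw [← hpow hx, ← hpow hy]
  exact pow_eq_pow_of_zpowers_eq_of_orderOf_eq_two_mul hxy
    (orderOf_mul_eq_two_mul_of_odd hy.2 hy.1 ht)

lemma mem_zpowers_of_forall_mem_cyclicSubgroupsOfCard {z t s : G} (hz : orderOf z = 2)
    (hzs : Commute z s) (ht : Odd (orderOf t))
    (hmem : ∀ H ∈ cyclicSubgroupsOfCard G (2 * orderOf t), t ∈ H) (hs : orderOf s = orderOf t) :
    s ∈ Subgroup.zpowers t := by
  have hsodd : Odd (orderOf s) := hs ▸ ht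
  have hzsq : z ^ 2 = 1 := orderOf_dvd_iff_pow_eq_one.mp hz.dvd
  have hzspow : (z * s) ^ (orderOf s + 1) = s := by
    rw [pow_succ, mul_pow_eq_left_of_odd hzs hzsq (pow_orderOf_eq_one s) hsodd, ← mul_assoc,
      ← sq, hzsq, one_mul]
  have hts : t ∈ Subgroup.zpowers s := by
    obtain ⟨k, hk⟩ := Subgroup.mem_zpowers_iff.mp <| hmem _ <|
      zpowers_mem_cyclicSubgroupsOfCard (hs ▸ orderOf_mul_eq_two_mul_of_odd hzs hz hsodd)
    refine Subgroup.mem_zpowers_iff.mpr ⟨k, ?_⟩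
    calc s ^ k = ((z * s) ^ k) ^ (orderOf s + 1) := by
          nth_rw 1 [← hzspow]
          rw [← zpow_natCast, ← zpow_natCast, zpow_comm]
      _ = t := by rw [hk, hs, pow_succ, pow_orderOf_eq_one, one_mul]
  have : Finite (Subgroup.zpowers s) := (orderOf_pos_iff.mp hsodd.pos).finite_zpowers
  rw [Subgroup.eq_of_le_of_card_ge (Subgroup.zpowers_le.mpr hts)
    (by rw [Nat.card_zpowers, Nat.card_zpowers, hs])]
  exact Subgroup.mem_zpowers s

section Prime

variable {p : ℕ} [Fact p.Prime] {t : G}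

lemma centralizer_subset_involutions_mul_zpowers (hp : Odd p) (ht : orderOf t = p)
    (hunique : ∀ s : G, orderOf s = p → s ∈ Subgroup.zpowers t)
    (hexp : ∀ g : G, Commute g t → g ^ (2 * p) = 1) :
    (Subgroup.centralizer {t} : Set G) ⊆
      insert 1 (involutionsCommutingWith t) * (Subgroup.zpowers t : Set G) := by
  intro g hg
  have hgt : Commute g t := Subgroup.mem_centralizer_singleton_iff.mp hg
  obtain ⟨k, rfl⟩ := hp
  have hinv : g ^ (2 * k + 1) ∈ insert 1 (involutionsCommutingWith t) := by
    rw [Set.mem_insert_iff, or_iff_not_imp_left]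
    exact fun hne ↦ ⟨orderOf_eq_prime (by rw [← pow_mul, mul_comm, hexp g hgt]) hne,
      hgt.pow_left _⟩
  have hmem : g ^ (2 * k) ∈ Subgroup.zpowers t := by
    by_cases hone : g ^ (2 * k) = 1
    · exact hone ▸ one_mem _
    · refine hunique _ (orderOf_eq_prime ?_ hone)
      rw [← pow_mul, mul_right_comm, pow_mul, hexp g hgt, one_pow]
  exact ⟨_, hinv, _, inv_mem hmem, by rw [pow_succ']; exact mul_inv_cancel_right _ _⟩

lemma finite_and_card_centralizer_le (hp : Odd p) (ht : orderOf t = p)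
    (hfin : (cyclicSubgroupsOfCard G (2 * p)).Finite)
    (hunique : ∀ s : G, orderOf s = p → s ∈ Subgroup.zpowers t)
    (hexp : ∀ g : G, Commute g t → g ^ (2 * p) = 1) :
    Finite (Subgroup.centralizer {t}) ∧
      Nat.card (Subgroup.centralizer {t}) ≤ ((cyclicSubgroupsOfCard G (2 * p)).ncard + 1) * p := by
  have hsub := centralizer_subset_involutions_mul_zpowers hp ht hunique hexp
  subst ht
  have hmaps := mapsTo_zpowers_mul_involutionsCommutingWith hp
  have hinj := injOn_zpowers_mul_involutionsCommutingWith hp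
  have hinvfin : (involutionsCommutingWith t).Finite := hfin.of_injOn hmaps hinj
  have hinvcard := Set.ncard_le_ncard_of_injOn _ hmaps hinj hfin
  have hprodfin : (insert 1 (involutionsCommutingWith t) * (Subgroup.zpowers t : Set G)).Finite :=
    (hinvfin.insert 1).mul (orderOf_pos_iff.mp hp.pos).finite_zpowers
  refine ⟨hprodfin.subset hsub, ?_⟩
  calc Nat.card (Subgroup.centralizer {t})
      ≤ Nat.card ↥(insert 1 (involutionsCommutingWith t) * (Subgroup.zpowers t : Set G)) :=
        Nat.card_mono hprodfin hsub
    _ ≤ (insert 1 (involutionsCommutingWith t)).ncard * Nat.card (Subgroup.zpowers t) :=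
        Set.natCard_mul_le
    _ ≤ ((cyclicSubgroupsOfCard G (2 * orderOf t)).ncard + 1) * orderOf t := by
        rw [Nat.card_zpowers]
        gcongr
        exact (Set.ncard_insert_le _ _).trans (by gcongr)

theorem finite_and_card_le_of_mem_center (hp : Odd p) (ht : orderOf t = p) {z : G}
    (hz : orderOf z = 2) (hcenter : z ∈ Subgroup.center G)
    (hfin : (cyclicSubgroupsOfCard G (2 * p)).Finite)
    (hmem : ∀ H ∈ cyclicSubgroupsOfCard G (2 * p), t ∈ H)
    (hexp : ∀ g : G, Commute g t → g ^ (2 * p) = 1) :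
    Finite G ∧
      Nat.card G ≤ ((cyclicSubgroupsOfCard G (2 * p)).ncard + 1) * p * (p - 1) := by
  have hunique (s : G) (hs : orderOf s = p) : s ∈ Subgroup.zpowers t := by
    subst ht
    have hzs : Commute z s := (Subgroup.mem_center_iff.mp hcenter s).symm
    exact mem_zpowers_of_forall_mem_cyclicSubgroupsOfCard hz hzs hp hmem hs
  have hnormal := zpowers_normal_of_forall_orderOf_eq (ht ▸ hunique)
  have hindex : (Subgroup.centralizer {t}).index ∣ p - 1 := by
    rw [← Nat.totient_prime Fact.out, ← ht]
    exact index_centralizer_dvd_totient_orderOf (orderOf_pos_iff.mp (ht ▸ hp.pos)) hnormal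
  have hpos : 0 < p - 1 := Nat.sub_pos_of_lt (Fact.out : p.Prime).one_lt
  obtain ⟨hCfin, hCcard⟩ := finite_and_card_centralizer_le hp ht hfin hunique hexp
  refine ⟨(Subgroup.finite_iff_finite_and_finiteIndex _).mpr
    ⟨hCfin, ⟨ne_zero_of_dvd_ne_zero hpos.ne' hindex⟩⟩, ?_⟩
  rw [← (Subgroup.centralizer {t}).card_mul_index]
  exact Nat.mul_le_mul hCcard (Nat.le_of_dvd hpos hindex)

end Prime

lemma pow_six_eq_one_of_commute {g t : G} (ht : orderOf t = 3)
    (horders : ∀ x : G, orderOf x ∈ ({1, 2, 3, 4, 6} : Set ℕ)) (h : Commute g t) :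
    g ^ 6 = 1 := by
  have hfour : orderOf g ≠ 4 := fun hg ↦ by
    have htwelve : orderOf (g * t) = 12 := by
      rw [h.orderOf_mul_eq_mul_orderOf_of_coprime (by rw [hg, ht]; decide), hg, ht]
    simpa [htwelve] using horders (g * t)
  rw [← orderOf_dvd_iff_pow_eq_one]
  have hg := horders g
  simp only [Set.mem_insert_iff, Set.mem_singleton_iff, hfour, false_or] at hg
  obtain hg | hg | hg | hg := hg <;> norm_num [hg]

theorem card_le_24_of_central_cube_general {t z : G}
    (horders : ∀ g : G, orderOf g ∈ ({1, 2, 3, 4, 6} : Set ℕ)) (ht : orderOf t = 3)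
    (hfin : (cyclicSubgroupsOfCard G 6).Finite) (hmem : ∀ H ∈ cyclicSubgroupsOfCard G 6, t ∈ H)
    (hz : orderOf z = 2) (hcenter : z ∈ Subgroup.center G) :
    Finite G ∧ Nat.card G ≤ 6 * ((cyclicSubgroupsOfCard G 6).ncard + 1) := by
  obtain ⟨hG, hcard⟩ := finite_and_card_le_of_mem_center (p := 3) (by decide) ht hz hcenter hfin
    hmem fun g hg ↦ pow_six_eq_one_of_commute ht horders hg
  exact ⟨hG, by simp only [Nat.reduceMul] at hcard; omega⟩

end Group

/-- Let `G` be a finite group with `π_e(G) ⊆ {1,2,3,4,6}` whose cyclic subgroups of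
order 6 are exactly `⟨a⟩, ⟨b⟩, ⟨c⟩`, where `a, b, c` have order 6 and `a² = b² = c²`.
If `a³` lies in the center of `G`, then `|G| ≤ 24`. -/
theorem card_le_24_of_central_cube
    (G : Type) [Group G] [Finite G] (a b c : G)
    (horders : ∀ g : G, orderOf g ∈ ({1, 2, 3, 4, 6} : Set ℕ))
    (ha : orderOf a = 6) (hb : orderOf b = 6) (hc : orderOf c = 6)
    (hab : Subgroup.zpowers a ≠ Subgroup.zpowers b)
    (hac : Subgroup.zpowers a ≠ Subgroup.zpowers c)
    (hbc : Subgroup.zpowers b ≠ Subgroup.zpowers c)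
    (hset : {H : Subgroup G | IsCyclic H ∧ Nat.card H = 6} =
      {Subgroup.zpowers a, Subgroup.zpowers b, Subgroup.zpowers c})
    (hsq1 : a ^ 2 = b ^ 2) (hsq2 : b ^ 2 = c ^ 2)
    (hZ3 : a ^ 3 ∈ Subgroup.center G) :
    Nat.card G ≤ 24 := by
  change cyclicSubgroupsOfCard G 6 = _ at hset
  have hncard : (cyclicSubgroupsOfCard G 6).ncard ≤ 3 := by
    rw [hset]
    exact (Set.ncard_eq_three.mpr ⟨_, _, _, hab, hac, hbc, rfl⟩).le
  have hmem : ∀ H ∈ cyclicSubgroupsOfCard G 6, a ^ 2 ∈ H := by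
    rw [hset]
    rintro H (rfl | rfl | rfl)
    exacts [Subgroup.npow_mem_zpowers a 2, hsq1 ▸ Subgroup.npow_mem_zpowers b 2,
      hsq1.trans hsq2 ▸ Subgroup.npow_mem_zpowers c 2]
  have hcard := (card_le_24_of_central_cube_general horders (by simp [orderOf_pow, ha])
    (Set.toFinite _) hmem (by simp [orderOf_pow, ha]) hZ3).2
  omega
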